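/- arXiv:2002.10242 — 2 statements merged into one kernel-verified Lean document; each statement's English description precedes it below -/
import Mathlib

section
/- Let c ≥ 1 and v ≥ 0 be natural numbers and let f : Fin v → Fin c be a uniformly random function (each of the c^v functions equally likely). Let S(f) = #{b ∈ Fin c : the fiber f⁻¹({b}) has exactly one element}. Then for every i with 0 ≤ i ≤ min(c, v), P(S(f) = i) = C(c,i) · C(v,i) · i! · (1/c)^i · ((c−i)/c)^{v−i} · P₀, where P₀ is the probability that a uniformly random function g : Fin (v−i) → Fin (c−i) has no fiber of exactly one element; and P(S(f) = i) = 0 whenever i > v. -/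
/-- The number of sub-channels occupied by exactly one packet under the assignment `f`. -/
def singletonFiberCount {v c : ℕ} (f : Fin v → Fin c) : ℕ :=
  (Finset.univ.filter
    (fun b : Fin c => (Finset.univ.filter (fun a : Fin v => f a = b)).card = 1)).card

/-- The probability, for a uniformly random function `f : Fin v → Fin c` (each of the
`c ^ v` functions equally likely), that exactly `i` sub-channels are occupied by exactly
one packet. -/
noncomputable def probSingleton (v c i : ℕ) : ℝ :=
  ((Finset.univ.filter
      (fun f : Fin v → Fin c => singletonFiberCount f = i)).card : ℝ) / (c : ℝ) ^ v

/-- number of functions with exactly `i` singleton fibers -/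
def cntS (v c i : ℕ) : ℕ :=
  (Finset.univ.filter (fun f : Fin v → Fin c => singletonFiberCount f = i)).card

/-- extend `g` by a new point `a` sent to a new value `b` -/
def extF {v c : ℕ} (a : Fin (v+1)) (b : Fin (c+1)) (g : Fin v → Fin c) :
    Fin (v+1) → Fin (c+1) :=
  Fin.insertNth (α := fun _ => Fin (c+1)) a b (fun j => b.succAbove (g j))

lemma extF_same {v c : ℕ} (a : Fin (v+1)) (b : Fin (c+1)) (g : Fin v → Fin c) :
    extF a b g a = b := by simp [extF]

lemma extF_succ {v c : ℕ} (a : Fin (v+1)) (b : Fin (c+1)) (g : Fin v → Fin c) (j : Fin v) :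
    extF a b g (a.succAbove j) = b.succAbove (g j) := by simp [extF]

lemma count_extF {v c : ℕ} (a : Fin (v+1)) (b : Fin (c+1)) (g : Fin v → Fin c) :
    singletonFiberCount (extF a b g) = singletonFiberCount g + 1 := by
  unfold singletonFiberCount
  simp only [Finset.card_filter]
  rw [Fin.sum_univ_succAbove _ b]
  simp only [Fin.sum_univ_succAbove _ a, extF_same, extF_succ]
  simp [Fin.succAbove_ne, (Fin.succAbove_ne _ _).symm, add_comm]

lemma card_pair {v c i : ℕ} (a : Fin (v+1)) (b : Fin (c+1)) :
    (Finset.univ.filter (fun f : Fin (v+1) → Fin (c+1) =>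
      singletonFiberCount f = i + 1 ∧ ∀ x, f x = b ↔ x = a)).card = cntS v c i := by
  symm
  unfold cntS
  apply Finset.card_bij (fun g _ => extF a b g)
  · intro g hg
    simp only [Finset.mem_filter, Finset.mem_univ, true_and] at hg ⊢
    refine ⟨by rw [count_extF, hg], fun x => ?_⟩
    rcases Fin.eq_self_or_eq_succAbove a x with rfl | ⟨j, rfl⟩
    · simp [extF_same]
    · simp [extF_succ, Fin.succAbove_ne]
  · intro g _ h _ e
    funext j
    have := congrFun e (a.succAbove j)
    rw [extF_succ, extF_succ] at this
    exact Fin.succAbove_right_injective this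
  · intro f hf
    simp only [Finset.mem_filter, Finset.mem_univ, true_and] at hf
    obtain ⟨h1, h2⟩ := hf
    have h3 : ∀ j, ∃ y, b.succAbove y = f (a.succAbove j) := fun j =>
      Fin.exists_succAbove_eq (fun e => Fin.succAbove_ne a j ((h2 _).1 e))
    choose g hg using h3
    have e : extF a b g = f := by
      funext x
      rcases Fin.eq_self_or_eq_succAbove a x with rfl | ⟨j, rfl⟩
      · rw [extF_same, (h2 _).2 rfl]
      · rw [extF_succ, hg]
    refine ⟨g, ?_, e⟩
    simp only [Finset.mem_filter, Finset.mem_univ, true_and]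
    rw [← e, count_extF] at h1
    omega

lemma count_eq {v c : ℕ} (f : Fin v → Fin c) :
    singletonFiberCount f = ∑ b : Fin c, ∑ a : Fin v, if (∀ x, f x = b ↔ x = a) then 1 else 0 := by
  unfold singletonFiberCount
  rw [Finset.card_filter]
  refine Finset.sum_congr rfl fun b _ => ?_
  split_ifs with h
  · obtain ⟨a, ha⟩ := Finset.card_eq_one.1 h
    have h2 : ∀ x, f x = b ↔ x = a := fun x => by
      have := Finset.ext_iff.1 ha x
      simpa using this
    rw [Finset.sum_eq_single a]
    · rw [if_pos h2]
    · intro y _ hy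
      rw [if_neg]
      intro h3
      exact hy ((h2 y).1 ((h3 y).2 rfl))
    · simp
  · symm
    apply Finset.sum_eq_zero
    intro a _
    rw [if_neg]
    intro h3
    apply h
    rw [Finset.card_eq_one]
    exact ⟨a, by ext x; simp [h3]⟩

lemma cnt_rec (v c i : ℕ) :
    (i + 1) * cntS (v+1) (c+1) (i+1) = (c+1) * ((v+1) * cntS v c i) := by
  have h : (i + 1) * cntS (v+1) (c+1) (i+1) =
      ∑ f ∈ Finset.univ.filter (fun f : Fin (v+1) → Fin (c+1) => singletonFiberCount f = i+1),
        singletonFiberCount f := by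
    rw [Finset.sum_congr rfl (g := fun _ => i+1) (by intro f hf; simpa using hf)]
    simp [cntS, mul_comm]
  rw [h, Finset.sum_congr rfl (fun f _ => count_eq f), Finset.sum_comm]
  have : ∀ b : Fin (c+1), ∑ f ∈ Finset.univ.filter
      (fun f : Fin (v+1) → Fin (c+1) => singletonFiberCount f = i+1),
      (∑ a : Fin (v+1), if (∀ x, f x = b ↔ x = a) then 1 else 0) = (v+1) * cntS v c i := by
    intro b
    rw [Finset.sum_comm]
    simp only [← Finset.card_filter, Finset.filter_filter, card_pair]
    simp
  simp only [this]
  simp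

lemma cnt_formula (i : ℕ) : ∀ v c : ℕ, i ≤ c → i ≤ v →
    cntS v c i = c.choose i * v.choose i * i.factorial * cntS (v-i) (c-i) 0 := by
  induction i with
  | zero => intro v c _ _; simp
  | succ i ih =>
    intro v c hc hv
    obtain ⟨c, rfl⟩ : ∃ d, c = d + 1 := ⟨c - 1, by omega⟩
    obtain ⟨v, rfl⟩ : ∃ d, v = d + 1 := ⟨v - 1, by omega⟩
    apply Nat.eq_of_mul_eq_mul_left (Nat.succ_pos i)
    have h1 := cnt_rec v c i
    rw [ih v c (by omega) (by omega)] at h1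
    have h2 := Nat.add_one_mul_choose_eq v i
    have h3 := Nat.add_one_mul_choose_eq c i
    rw [Nat.succ_eq_add_one, h1, Nat.add_sub_add_right, Nat.add_sub_add_right, Nat.factorial_succ]
    calc _ = ((c+1) * c.choose i) * ((v+1) * v.choose i) * i.factorial * cntS (v-i) (c-i) 0 := by
          ring
      _ = _ := by rw [h2, h3]; ring

lemma count_le {v c : ℕ} (f : Fin v → Fin c) : singletonFiberCount f ≤ v := by
  have : (Finset.univ.filter
    (fun b : Fin c => (Finset.univ.filter (fun a : Fin v => f a = b)).card = 1)) ⊆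
      Finset.univ.image f := by
    intro b hb
    simp only [Finset.mem_filter, Finset.mem_univ, true_and] at hb
    obtain ⟨a, ha⟩ := Finset.card_pos.1 (by omega : 0 < (Finset.univ.filter (fun a => f a = b)).card)
    simp only [Finset.mem_filter, Finset.mem_univ, true_and] at ha
    simp only [Finset.mem_image, Finset.mem_univ, true_and]
    exact ⟨a, ha⟩
  have h := (Finset.card_le_card this).trans Finset.card_image_le
  simpa [singletonFiberCount] using h

lemma prob_eq (v c i : ℕ) : probSingleton v c i = (cntS v c i : ℝ) / (c : ℝ) ^ v := rfl

/-- Recursive formula for `p_{i,1,c,v}`: the probability that exactly `i` sub-channels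
contain exactly one packet when `v` vehicles select uniformly at random among `c ≥ 1`
sub-channels, and `p_{i,1,c,v} = 0` whenever `i > v`. -/
theorem caps_prob_singleton_fibers (c v : ℕ) (hc : 1 ≤ c) :
    (∀ i, i ≤ min c v →
      probSingleton v c i
        = (c.choose i : ℝ) * (v.choose i : ℝ) * (i.factorial : ℝ)
            * (1 / (c : ℝ)) ^ i * (((c : ℝ) - (i : ℝ)) / (c : ℝ)) ^ (v - i)
            * probSingleton (v - i) (c - i) 0)
    ∧ (∀ i, v < i → probSingleton v c i = 0) := by
  constructor
  · intro i hi
    have hic : i ≤ c := hi.trans (min_le_left _ _)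
    have hiv : i ≤ v := hi.trans (min_le_right _ _)
    have hc0 : (c : ℝ) ≠ 0 := by positivity
    have key : ((c : ℝ) - i) ^ (v - i) * probSingleton (v - i) (c - i) 0
        = cntS (v-i) (c-i) 0 := by
      rw [prob_eq, Nat.cast_sub hic]
      by_cases h : ((c : ℝ) - i) ^ (v - i) = 0
      · have hne : v - i ≠ 0 := by
          intro h0
          simp [h0] at h
        have h' : (c : ℝ) - i = 0 := by simpa [hne] using h
        have hci : c - i = 0 := by
          rw [← Nat.cast_sub hic] at h'
          exact_mod_cast h'
        have hz : cntS (v-i) (c-i) 0 = 0 := by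
          unfold cntS
          rw [Finset.card_eq_zero, Finset.filter_eq_empty_iff]
          intro f
          have := (f ⟨0, by omega⟩).isLt
          omega
        simp [hz]
      · field_simp
    rw [prob_eq, cnt_formula i v c hic hiv, div_pow ((c : ℝ) - i)]
    push_cast
    rw [← key]
    have hp : (c : ℝ) ^ v = (c : ℝ) ^ i * (c : ℝ) ^ (v - i) := by
      rw [← pow_add]; congr 1; omega
    rw [hp, one_div, inv_pow]
    field_simp
  · intro i hi
    rw [prob_eq]
    have : cntS v c i = 0 := by
      unfold cntS
      rw [Finset.card_eq_zero, Finset.filter_eq_empty_iff]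
      intro f _
      have := count_le f
      omega
    simp [this]
end

section
/- Let N ≥ 2 and T ≥ 1 be integers, and for real α > 1/N define F(α) = (N−1)·(T+α)/(2·(N·α−1)) + (N·α−N)·(α−1)/(2·(N·α−1)). Then F attains its minimum on (1/N, ∞) uniquely at α* = (1 + √(N·(N−1)·(T+1)))/N, i.e., F(α) ≥ F(α*) for all α > 1/N with equality iff α = α*, and equivalently the minimum is characterized by the equation (N·α−1)² = N·(N−1)·(T+1). (The theoretically optimal RRI.) -/
/-- The theoretically optimal RRI: the static-flow average AoI
`F(α) = (N−1)(T+α)/(2(Nα−1)) + (Nα−N)(α−1)/(2(Nα−1))` attains its minimum on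
`(1/N, ∞)` uniquely at `α* = (1 + √(N(N−1)(T+1)))/N`, and on `(1/N, ∞)` the minimum
is characterized by the equation `(Nα−1)² = N(N−1)(T+1)`. -/
theorem caps_optimal_rri (N T : ℤ) (hN : 2 ≤ N) (hT : 1 ≤ T) :
    let F : ℝ → ℝ := fun α =>
      ((N : ℝ) - 1) * ((T : ℝ) + α) / (2 * ((N : ℝ) * α - 1))
        + ((N : ℝ) * α - (N : ℝ)) * (α - 1) / (2 * ((N : ℝ) * α - 1))
    let αstar : ℝ := (1 + Real.sqrt ((N : ℝ) * ((N : ℝ) - 1) * ((T : ℝ) + 1))) / (N : ℝ)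
    (1 / (N : ℝ) < αstar)
      ∧ (∀ α : ℝ, 1 / (N : ℝ) < α → F αstar ≤ F α)
      ∧ (∀ α : ℝ, 1 / (N : ℝ) < α → (F α = F αstar ↔ α = αstar))
      ∧ (∀ α : ℝ, 1 / (N : ℝ) < α →
          (((N : ℝ) * α - 1) ^ 2 = (N : ℝ) * ((N : ℝ) - 1) * ((T : ℝ) + 1) ↔ α = αstar)) := by
  intro F αstar
  have hn : (2 : ℝ) ≤ (N : ℝ) := by exact_mod_cast hN
  have ht : (1 : ℝ) ≤ (T : ℝ) := by exact_mod_cast hT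
  have hn0 : (0 : ℝ) < (N : ℝ) := by linarith
  have hK : 0 < (N : ℝ) * ((N : ℝ) - 1) * ((T : ℝ) + 1) :=
    mul_pos (mul_pos hn0 (by linarith)) (by linarith)
  obtain ⟨s, hs⟩ : ∃ s, s = Real.sqrt ((N : ℝ) * ((N : ℝ) - 1) * ((T : ℝ) + 1)) := ⟨_, rfl⟩
  have hs0 : 0 < s := by rw [hs]; exact Real.sqrt_pos.mpr hK
  have hs2 : s ^ 2 = (N : ℝ) * ((N : ℝ) - 1) * ((T : ℝ) + 1) := by
    rw [hs]; exact Real.sq_sqrt hK.le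
  have hstar : αstar = (1 + s) / (N : ℝ) := by rw [hs]
  have hNs : (N : ℝ) * αstar - 1 = s := by rw [hstar]; field_simp; ring
  have hpos : ∀ α : ℝ, 1 / (N : ℝ) < α → 0 < (N : ℝ) * α - 1 := by
    intro α h
    rw [div_lt_iff₀ hn0] at h
    linarith
  have hlt : 1 / (N : ℝ) < αstar := by
    rw [div_lt_iff₀ hn0]; linarith
  have heq : ∀ α : ℝ, α = αstar ↔ (N : ℝ) * α - 1 = s := by
    intro α
    constructor
    · rintro rfl
      exact hNs
    · intro h
      apply mul_left_cancel₀ hn0.ne'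
      linarith
  have key : ∀ α : ℝ, 1 / (N : ℝ) < α →
      F α = (2 * s - ((N : ℝ) - 1)) / (2 * N)
        + ((N : ℝ) * α - 1 - s) ^ 2 / (2 * N * ((N : ℝ) * α - 1)) := by
    intro α h
    have hu := (hpos α h).ne'
    simp only [F]
    rw [← add_div, div_add_div _ _ (by positivity) (by positivity),
      div_eq_div_iff (by positivity) (by positivity)]
    linear_combination (-(4 * (N : ℝ) * ((N : ℝ) * α - 1))) * hs2
  have hmin : F αstar = (2 * s - ((N : ℝ) - 1)) / (2 * N) := by
    rw [key _ hlt, hNs]; simp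
  refine ⟨hlt, ?_, ?_, ?_⟩
  · intro α h
    have hu := hpos α h
    rw [hmin, key α h]
    have : 0 ≤ ((N : ℝ) * α - 1 - s) ^ 2 / (2 * N * ((N : ℝ) * α - 1)) := by positivity
    linarith
  · intro α h
    have hu := hpos α h
    have hd : 2 * (N : ℝ) * ((N : ℝ) * α - 1) ≠ 0 := by positivity
    rw [hmin, key α h, heq, add_eq_left, div_eq_zero_iff, or_iff_left hd,
      pow_eq_zero_iff two_ne_zero, sub_eq_zero]
  · intro α h
    have hu := hpos α h
    rw [heq, ← hs2, pow_left_inj₀ hu.le hs0.le two_ne_zero]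
end
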